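/- Strong-coupling asymptotics of the lowest magnetic eigenvalue: let B ≠ 0, d > 0, b ∈ (0,d). For every α ∈ ℝ there is a unique z = ε₀(α) < |B| + (π/d)² (the bottom of Σ_B) with ξ_B(b,z) = α, and ε₀(α) = −16π²α²·(1 + O(α^{−1})) as α → −∞; in particular the leading term is independent of B and coincides with the non-magnetic strong-coupling asymptotics. -/

import Mathlib

/-!
Below the bottom `E` of `Σ_B` no term of the series of `ξ_B` decreases in the spectral parameter,
and the first one increases strictly, because `ψ` is increasing. Hence `ξ_B` increases continuously,
and the pole of `ψ` at `0` sends it to `+∞` at `E`.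

For `z = -k²` put `s = k d / π`. Up to a summable error that is uniform in `k`, `ψ` may be replaced
by `log`, which turns the series into `-∑ log (1 + s² / n²) sin² (n φ)` with `φ = π b / d`. Write
`sin² (n φ) = (1 - cos (2 n φ)) / 2`. Euler's product for `sinh` evaluates the non-oscillating part
as `log (sinh (π s) / (π s))`. In the oscillating part, two summations by parts move the second
difference from `cos` to the sequence `log (1 + s² / n²)`, which is convex in `n`, so that its
second differences are nonnegative with a telescoping sum. The result is
`4 π ξ_B (-k²) = -k + O(1)`, and solving for `k` gives the asymptotics of the eigenvalue.
-/

open Real Filter Topology Asymptotics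

/-- The digamma function `ψ = Γ'/Γ`. -/
noncomputable def digamma (x : ℝ) : ℝ := deriv Real.Gamma x / Real.Gamma x

/-- The set of Landau–transverse levels
`Σ_B = {|B|(2m+1) + (πn/d)² : m ∈ ℤ_{≥0}, n ∈ ℤ_{≥1}}` of the free magnetic
Hamiltonian in a Dirichlet layer of width `d`. -/
def landauLevels (B d : ℝ) : Set ℝ :=
  {x | ∃ m n : ℕ, x = |B| * (2 * (m : ℝ) + 1) + (π * ((n : ℝ) + 1) / d) ^ 2}

/-- The `n`-th term (for `n+1`-st transverse mode) of the series defining the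
magnetic regularized Green's function:
`t_n = ln((πn)²/(2|B|d²)) − ψ((|B| − z + (πn/d)²)/(2|B|))`. -/
noncomputable def magTerm (B d z : ℝ) (n : ℕ) : ℝ :=
  Real.log ((π * ((n : ℝ) + 1)) ^ 2 / (2 * |B| * d ^ 2)) -
    digamma ((|B| - z + (π * ((n : ℝ) + 1) / d) ^ 2) / (2 * |B|))

/-- The magnetic regularized Green's function `ξ_B(b,z)` of a point interaction at
height `b ∈ (0,d)` in the Dirichlet layer of width `d` with homogeneous magnetic
field of strength `B`. -/
noncomputable def xiB (B d b z : ℝ) : ℝ :=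
  (1 / (2 * π * d)) * ∑' n : ℕ, magTerm B d z n * Real.sin (π * ((n : ℝ) + 1) * b / d) ^ 2
    + (1 / (4 * π * d)) *
      (Real.eulerMascheroniConstant + digamma (b / d) + (π / 2) * Real.cot (π * b / d))

section Digamma

lemma hasDerivAt_log_Gamma {x : ℝ} (hx : 0 < x) :
    HasDerivAt (log ∘ Gamma) (digamma x) x :=
  (differentiableOn_Gamma_Ioi.differentiableAt (Ioi_mem_nhds hx)).hasDerivAt.log
    (Gamma_pos_of_pos hx).ne'

lemma log_Gamma_add_one {x : ℝ} (hx : 0 < x) :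
    log (Gamma (x + 1)) = log x + log (Gamma x) := by
  rw [Gamma_add_one hx.ne', log_mul hx.ne' (Gamma_pos_of_pos hx).ne']

lemma digamma_add_one {x : ℝ} (hx : 0 < x) : digamma (x + 1) = digamma x + x⁻¹ := by
  have hsum : HasDerivAt (fun y ↦ log y + log (Gamma y)) (x⁻¹ + digamma x) x :=
    (hasDerivAt_log hx.ne').add (hasDerivAt_log_Gamma hx)
  have hshift : HasDerivAt (fun y ↦ log (Gamma (y + 1))) (digamma (x + 1)) x :=
    (hasDerivAt_log_Gamma (by positivity : 0 < x + 1)).comp_add_const x 1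
  have heq : (fun y ↦ log (Gamma (y + 1))) =ᶠ[𝓝 x] fun y ↦ log y + log (Gamma y) :=
    (eventually_gt_nhds hx).mono fun y hy ↦ log_Gamma_add_one hy
  rw [hshift.unique (hsum.congr_of_eventuallyEq heq), add_comm]

lemma monotoneOn_digamma : MonotoneOn digamma (Set.Ioi 0) := by
  intro x hx y hy hxy
  rw [← (hasDerivAt_log_Gamma hx).deriv, ← (hasDerivAt_log_Gamma hy).deriv]
  exact convexOn_log_Gamma.monotoneOn_deriv
    (fun z hz ↦ (hasDerivAt_log_Gamma hz).differentiableAt) hx hy hxy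

lemma strictMonoOn_digamma : StrictMonoOn digamma (Set.Ioi 0) := by
  intro x (hx : 0 < x) y (hy : 0 < y) hxy
  have hshift : digamma (x + 1) ≤ digamma (y + 1) :=
    monotoneOn_digamma (by positivity : 0 < x + 1) (by positivity : 0 < y + 1) (by gcongr)
  rw [digamma_add_one hx, digamma_add_one hy] at hshift
  linarith [inv_strictAnti₀ hx hxy]

lemma continuousOn_digamma : ContinuousOn digamma (Set.Ioi 0) := by
  intro x (hx : 0 < x)
  -- `digamma` is a derivative, so it has the intermediate value property; being monotone as well,
  -- it cannot jump.
  have himage : (digamma '' Set.Ioi 0).OrdConnected :=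
    Set.ordConnected_Ioi.image_hasDerivWithinAt fun y hy ↦
      (hasDerivAt_log_Gamma hy).hasDerivWithinAt
  have hhalf : 0 < x / 2 := by positivity
  have hdouble : 0 < 2 * x := by positivity
  refine (strictMonoOn_digamma.continuousAt_of_image_mem_nhds (Ioi_mem_nhds hx)
    (mem_of_superset (Icc_mem_nhds ?_ ?_) (himage.out ⟨_, hhalf, rfl⟩
      ⟨_, hdouble, rfl⟩))).continuousWithinAt
  · exact strictMonoOn_digamma hhalf hx (by linarith)
  · exact strictMonoOn_digamma hx hdouble (by linarith)

lemma tendsto_digamma_nhdsGT_zero : Tendsto digamma (𝓝[>] 0) atBot := by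
  have hshift : Tendsto (fun x ↦ digamma (x + 1)) (𝓝[>] 0) (𝓝 (digamma 1)) := by
    have hcont : ContinuousAt digamma (0 + 1) :=
      continuousOn_digamma.continuousAt (Ioi_mem_nhds (by norm_num))
    have hadd : Tendsto (fun x : ℝ ↦ x + 1) (𝓝[>] 0) (𝓝 (0 + 1)) :=
      (continuous_add_const 1).continuousWithinAt
    simpa [Function.comp_def] using hcont.tendsto.comp hadd
  refine (hshift.add_atBot (tendsto_neg_atTop_atBot.comp tendsto_inv_nhdsGT_zero)).congr' ?_
  filter_upwards [self_mem_nhdsWithin] with x hx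
  simp [digamma_add_one hx]

lemma slope_log_Gamma_add_one {x : ℝ} (hx : 0 < x) :
    slope (log ∘ Gamma) x (x + 1) = log x := by
  simp [slope_def_field, log_Gamma_add_one hx]

lemma digamma_le_log {x : ℝ} (hx : 0 < x) : digamma x ≤ log x := by
  rw [← slope_log_Gamma_add_one hx]
  exact convexOn_log_Gamma.le_slope_of_hasDerivAt hx (by positivity : 0 < x + 1) (by simp)
    (hasDerivAt_log_Gamma hx)

lemma log_sub_inv_le_digamma {x : ℝ} (hx : 0 < x) : log x - x⁻¹ ≤ digamma x := by
  have hx1 : 0 < x + 1 := by positivity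
  rw [sub_le_iff_le_add, ← digamma_add_one hx, ← slope_log_Gamma_add_one hx]
  exact convexOn_log_Gamma.slope_le_of_hasDerivAt hx hx1 (by simp) (hasDerivAt_log_Gamma hx1)

lemma log_sub_log_le {x y : ℝ} (hx : 0 < x) (hy : 0 < y) : log x - log y ≤ (x - y) / y := by
  rw [← log_div hx.ne' hy.ne', sub_div, div_self hy.ne']
  exact log_le_sub_one_of_pos (div_pos hx hy)

lemma abs_log_sub_digamma_le {x y : ℝ} (hx : 0 < x) (hy : 0 < y) :
    |log x - digamma y| ≤ (1 + |x - y|) / min x y := by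
  have : 0 < min x y := lt_min hx hy
  rw [abs_le']
  constructor
  · calc log x - digamma y ≤ log x - log y + y⁻¹ := by linarith [log_sub_inv_le_digamma hy]
      _ ≤ (x - y) / y + y⁻¹ := by gcongr; exact log_sub_log_le hx hy
      _ = (1 + (x - y)) / y := by ring
      _ ≤ (1 + |x - y|) / min x y := by
        gcongr
        · exact le_abs_self _
        · exact min_le_right x y
  · calc -(log x - digamma y) ≤ log y - log x := by linarith [digamma_le_log hy]
      _ ≤ (y - x) / x := log_sub_log_le hy hx
      _ ≤ (1 + |x - y|) / min x y := by
        gcongr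
        · linarith [neg_le_abs (x - y)]
        · exact min_le_left x y

lemma log_sub_digamma_add_isBigO_inv (a : ℝ) :
    (fun x ↦ log x - digamma (x + a)) =O[atTop] fun x ↦ x⁻¹ := by
  refine .of_bound (2 * (1 + |a|)) ?_
  filter_upwards [eventually_gt_atTop 0, eventually_ge_atTop (2 * |a|)] with x hx hxa
  have hhalf : x / 2 ≤ x + a := by linarith [neg_abs_le a]
  calc ‖log x - digamma (x + a)‖ ≤ (1 + |x - (x + a)|) / min x (x + a) :=
        abs_log_sub_digamma_le hx (by linarith)
    _ ≤ (1 + |a|) / (x / 2) := by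
        rw [sub_add_cancel_left, abs_neg]
        gcongr
        exact le_min (by linarith) hhalf
    _ = 2 * (1 + |a|) * ‖x⁻¹‖ := by
        rw [norm_of_nonneg (by positivity)]
        field_simp

end Digamma

section Series

lemma summable_mul_of_abs_le {ι : Type*} {f w : ι → ℝ} {M : ℝ} (hf : Summable f)
    (hw : ∀ i, |w i| ≤ M) : Summable fun i ↦ f i * w i :=
  .of_norm_bounded (hf.abs.mul_right M) fun i ↦ by
    rw [norm_mul]
    exact mul_le_mul_of_nonneg_left (hw i) (norm_nonneg _)

lemma continuousOn_tsum_of_antitoneOn {ι α : Type*} [TopologicalSpace α] [LinearOrder α]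
    [OrderTopology α] {f : ι → α → ℝ} {s : Set α} (hs : IsOpen s)
    (hanti : ∀ i, AntitoneOn (f i) s) (hcont : ∀ i, ContinuousOn (f i) s)
    (hsum : ∀ x ∈ s, Summable fun i ↦ f i x) :
    ContinuousOn (fun x ↦ ∑' i, f i x) s := by
  intro x hx
  obtain ⟨a, b, hxab, hnhds, hsub⟩ := exists_Icc_mem_subset_of_mem_nhds (hs.mem_nhds hx)
  have hab : a ≤ b := hxab.1.trans hxab.2
  have ha : a ∈ s := hsub (Set.left_mem_Icc.2 hab)
  have hb : b ∈ s := hsub (Set.right_mem_Icc.2 hab)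
  refine ((continuousOn_tsum (fun i ↦ (hcont i).mono hsub)
    ((hsum a ha).abs.add (hsum b hb).abs) fun i y hy ↦ ?_).continuousAt hnhds).continuousWithinAt
  calc ‖f i y‖ ≤ max |f i b| |f i a| :=
        abs_le_max_abs_abs (hanti i (hsub hy) hb hy.2) (hanti i ha (hsub hy) hy.1)
    _ ≤ |f i a| + |f i b| :=
        max_le (le_add_of_nonneg_left (abs_nonneg _)) (le_add_of_nonneg_right (abs_nonneg _))

lemma summable_inv_add_one_sq : Summable fun n : ℕ ↦ (((n : ℝ) + 1) ^ 2)⁻¹ := by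
  simpa using (summable_nat_add_iff 1).2 (summable_nat_pow_inv.2 one_lt_two)

lemma tsum_mul_second_difference {g u : ℕ → ℝ} {M : ℝ} (hg : Summable g)
    (hu : ∀ n, |u n| ≤ M) :
    ∑' n, g n * (u (n + 2) - 2 * u (n + 1) + u n) =
      ∑' n, (g (n + 2) - 2 * g (n + 1) + g n) * u (n + 2)
        + g 0 * u 0 + (g 1 - 2 * g 0) * u 1 := by
  set P : ℕ → ℕ → ℝ := fun i j ↦ ∑' n, g (n + i) * u (n + j)
  have hsum (i j : ℕ) : Summable fun n ↦ g (n + i) * u (n + j) :=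
    summable_mul_of_abs_le ((summable_nat_add_iff i).2 hg) fun n ↦ hu (n + j)
  have hP (i j : ℕ) : HasSum (fun n ↦ g (n + i) * u (n + j)) (P i j) := (hsum i j).hasSum
  have hleft : HasSum (fun n ↦ g n * (u (n + 2) - 2 * u (n + 1) + u n))
      (P 0 2 - 2 * P 0 1 + P 0 0) := by
    exact (((hP 0 2).sub ((hP 0 1).mul_left 2)).add (hP 0 0)).congr_fun fun n ↦ by
      simp only [add_zero]
      ring
  have hright : HasSum (fun n ↦ (g (n + 2) - 2 * g (n + 1) + g n) * u (n + 2))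
      (P 2 2 - 2 * P 1 2 + P 0 2) := by
    exact (((hP 2 2).sub ((hP 1 2).mul_left 2)).add (hP 0 2)).congr_fun fun n ↦ by
      simp only [add_zero]
      ring
  have hdiag : g 0 * u 0 + g 1 * u 1 + P 2 2 = P 0 0 := by
    simpa [P, Finset.sum_range_succ] using (hsum 0 0).sum_add_tsum_nat_add 2
  have hoff : g 0 * u 1 + P 1 2 = P 0 1 := by
    simpa [P, add_assoc] using (hsum 0 1).sum_add_tsum_nat_add 1
  rw [hleft.tsum_eq, hright.tsum_eq, ← hdiag, ← hoff]
  ring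

lemma tsum_second_difference {g : ℕ → ℝ} (hg : Summable g) :
    ∑' n, (g (n + 2) - 2 * g (n + 1) + g n) = g 0 - g 1 := by
  have h := tsum_mul_second_difference (u := fun _ ↦ 1) (M := 1) hg (by simp)
  have hone : (1 : ℝ) - 2 + 1 = 0 := by norm_num
  simp only [mul_one, hone, mul_zero, tsum_zero] at h
  linarith

lemma summable_second_difference {g : ℕ → ℝ} (hg : Summable g) :
    Summable fun n ↦ g (n + 2) - 2 * g (n + 1) + g n :=
  (((summable_nat_add_iff 2).2 hg).sub (((summable_nat_add_iff 1).2 hg).mul_left 2)).add hg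

lemma abs_tsum_mul_cos_add_half_le {g : ℕ → ℝ} (hg : Summable g)
    (hconv : ∀ n, 0 ≤ g (n + 2) - 2 * g (n + 1) + g n) {θ : ℝ} (hθ : cos θ < 1) :
    |∑' n, g n * cos ((n + 1) * θ) + g 0 / 2| ≤ (g 0 - g 1) / (1 - cos θ) := by
  set A := ∑' n, g n * cos ((n + 1) * θ)
  set R := ∑' n, (g (n + 2) - 2 * g (n + 1) + g n) * cos ((n + 2 : ℕ) * θ)
  have hR : |R| ≤ g 0 - g 1 := by
    rw [← tsum_second_difference hg]
    refine tsum_of_norm_bounded (E := ℝ) (summable_second_difference hg).hasSum fun n ↦ ?_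
    rw [norm_mul, norm_of_nonneg (hconv n)]
    exact mul_le_of_le_one_right (hconv n) (abs_cos_le_one _)
  have hcos (n : ℕ) : cos ((n + 2 : ℕ) * θ) - 2 * cos ((n + 1 : ℕ) * θ) + cos (n * θ) =
      -(2 - 2 * cos θ) * cos ((n + 1) * θ) := by
    have hadd : cos ((n + 2 : ℕ) * θ) = cos ((n + 1) * θ + θ) := by push_cast; ring_nf
    have hsub : cos (n * θ) = cos ((n + 1) * θ - θ) := by ring_nf
    rw [hadd, hsub, cos_add, cos_sub]
    push_cast
    ring
  have hparts : -(2 - 2 * cos θ) * A = R + g 0 + (g 1 - 2 * g 0) * cos θ := by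
    have h := tsum_mul_second_difference (u := fun n ↦ cos (n * θ)) hg
      fun n ↦ abs_cos_le_one _
    simp only [hcos, mul_left_comm _ (-(2 - 2 * cos θ)), tsum_mul_left] at h
    simpa [R] using h
  have hpos : 0 < 1 - cos θ := by linarith
  rw [le_div_iff₀ hpos]
  calc |A + g 0 / 2| * (1 - cos θ) = |(A + g 0 / 2) * (1 - cos θ)| := by
        rw [abs_mul, abs_of_pos hpos]
    _ = |cos θ * (g 0 - g 1) - R| / 2 := by
        rw [← abs_two, ← abs_div, abs_two]
        congr 1
        linear_combination -hparts / 2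
    _ ≤ (|cos θ * (g 0 - g 1)| + |R|) / 2 := by gcongr; exact abs_sub _ _
    _ ≤ (1 * (g 0 - g 1) + (g 0 - g 1)) / 2 := by
        rw [abs_mul, abs_of_nonneg ((abs_nonneg R).trans hR)]
        gcongr
        · exact (abs_nonneg R).trans hR
        · exact abs_cos_le_one θ
    _ = g 0 - g 1 := by ring

end Series

section EulerProduct

lemma tendsto_euler_sinh_prod (s : ℝ) :
    Tendsto (fun n : ℕ ↦ π * s * ∏ j ∈ Finset.range n, (1 + s ^ 2 / ((j : ℝ) + 1) ^ 2)) atTop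
      (𝓝 (sinh (π * s))) := by
  have hlim := (Complex.continuous_re.tendsto _).comp
    ((Complex.tendsto_euler_sin_prod (s * Complex.I)).mul_const (-Complex.I))
  have hsin : Complex.sin (π * (s * Complex.I)) * -Complex.I = (sinh (π * s) : ℝ) := by
    rw [← mul_assoc, Complex.sin_mul_I, mul_neg, mul_assoc, Complex.I_mul_I]
    simp
  have hprod (n : ℕ) : (π * (s * Complex.I) *
      ∏ j ∈ Finset.range n, (1 - (s * Complex.I) ^ 2 / ((j : ℂ) + 1) ^ 2)) * -Complex.I =
        (π * s * ∏ j ∈ Finset.range n, (1 + s ^ 2 / ((j : ℝ) + 1) ^ 2) : ℝ) := by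
    simp only [mul_pow, Complex.I_sq, mul_neg_one, neg_div, sub_neg_eq_add]
    push_cast
    linear_combination (-π * s * ∏ j ∈ Finset.range n, (1 + (s : ℂ) ^ 2 / ((j : ℂ) + 1) ^ 2))
      * Complex.I_mul_I
  rw [hsin, Complex.ofReal_re] at hlim
  exact hlim.congr fun n ↦ by rw [Function.comp_apply, hprod, Complex.ofReal_re]

lemma tendsto_log_sinh_sub_id : Tendsto (fun x ↦ log (sinh x) - x) atTop (𝓝 (-log 2)) := by
  have hexp : Tendsto (fun x : ℝ ↦ (1 - exp (-x) * exp (-x)) / 2) atTop (𝓝 2⁻¹) := by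
    simpa using ((tendsto_exp_neg_atTop_nhds_zero.mul
      tendsto_exp_neg_atTop_nhds_zero).const_sub 1).div_const 2
  rw [← log_inv]
  refine (hexp.log (by norm_num)).congr' ?_
  filter_upwards [eventually_gt_atTop 0] with x hx
  have hsinh : (1 - exp (-x) * exp (-x)) / 2 = sinh x / exp x := by
    rw [sinh_eq, exp_neg]
    field_simp
  rw [hsinh, log_div (sinh_pos_iff.2 hx).ne' (exp_ne_zero x), log_exp]

/-- The logarithm of the `(n + 1)`-st factor of Euler's product
`sinh (π s) = π s ∏_{n ≥ 1} (1 + s² / n²)`. -/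
noncomputable def logEulerFactor (s : ℝ) (n : ℕ) : ℝ := log (1 + s ^ 2 / ((n : ℝ) + 1) ^ 2)

lemma logEulerFactor_nonneg (s : ℝ) (n : ℕ) : 0 ≤ logEulerFactor s n :=
  log_nonneg (le_add_of_nonneg_right (by positivity))

lemma summable_logEulerFactor (s : ℝ) : Summable (logEulerFactor s) := by
  refine .of_nonneg_of_le (logEulerFactor_nonneg s) (fun n ↦ ?_)
    (summable_inv_add_one_sq.mul_left (s ^ 2))
  exact (log_le_sub_one_of_pos (by positivity)).trans_eq (by ring)

lemma tsum_logEulerFactor {s : ℝ} (hs : 0 < s) :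
    ∑' n, logEulerFactor s n = log (sinh (π * s)) - log (π * s) := by
  have hπs : 0 < π * s := by positivity
  refine tendsto_nhds_unique (summable_logEulerFactor s).hasSum.tendsto_sum_nat
    ((((tendsto_euler_sinh_prod s).log (sinh_pos_iff.2 hπs).ne').sub_const _).congr fun n ↦ ?_)
  have hne : ∀ j ∈ Finset.range n, 1 + s ^ 2 / ((j : ℝ) + 1) ^ 2 ≠ 0 := fun j _ ↦ by positivity
  rw [log_mul hπs.ne' (Finset.prod_ne_zero_iff.2 hne), log_prod hne, add_sub_cancel_left]
  rfl

lemma tsum_logEulerFactor_add_half_isBigO_one :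
    (fun s ↦ ∑' n, logEulerFactor s n + logEulerFactor s 0 / 2 - π * s)
      =O[atTop] fun _ ↦ (1 : ℝ) := by
  have hsinh : Tendsto (fun s ↦ log (sinh (π * s)) - π * s) atTop (𝓝 (-log 2)) :=
    tendsto_log_sinh_sub_id.comp (tendsto_id.const_mul_atTop pi_pos)
  have hlog : Tendsto (fun s : ℝ ↦ log (1 + s⁻¹ ^ 2) / 2) atTop (𝓝 (log (1 + 0 ^ 2) / 2)) :=
    (((tendsto_inv_atTop_zero.pow 2).const_add 1).log (by norm_num)).div_const 2
  refine (((hsinh.sub_const (log π)).add hlog).congr' ?_).isBigO_one ℝ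
  filter_upwards [eventually_gt_atTop 0] with s hs
  have hfirst : logEulerFactor s 0 = 2 * log s + log (1 + s⁻¹ ^ 2) := by
    rw [← Nat.cast_two, ← log_pow, ← log_mul (by positivity) (by positivity), logEulerFactor]
    congr 1
    rw [Nat.cast_zero]
    field_simp
    ring
  rw [tsum_logEulerFactor hs, hfirst, log_mul pi_ne_zero hs.ne']
  ring

lemma logEulerFactor_second_difference_nonneg (s : ℝ) (n : ℕ) :
    0 ≤ logEulerFactor s (n + 2) - 2 * logEulerFactor s (n + 1) + logEulerFactor s n := by
  have hpos (m : ℕ) : 0 < 1 + s ^ 2 / ((m : ℝ) + 1) ^ 2 := by positivity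
  suffices 2 * logEulerFactor s (n + 1) ≤ logEulerFactor s n + logEulerFactor s (n + 2) by linarith
  simp only [logEulerFactor]
  rw [← log_mul (hpos _).ne' (hpos _).ne', ← Nat.cast_two, ← log_pow]
  refine log_le_log (pow_pos (hpos _) 2) ?_
  push_cast
  set p : ℝ := s / (n + 1)
  set q : ℝ := s / (n + 2 + 1)
  have hmid : s ^ 2 / ((n : ℝ) + 1 + 1) ^ 2 ≤ p * q := by
    rw [div_mul_div_comm, ← sq]
    gcongr
    linarith
  calc (1 + s ^ 2 / ((n : ℝ) + 1 + 1) ^ 2) ^ 2 ≤ (1 + p * q) ^ 2 := by gcongr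
    _ ≤ (1 + p ^ 2) * (1 + q ^ 2) := by linarith [sq_nonneg (p - q)]
    _ = (1 + s ^ 2 / ((n : ℝ) + 1) ^ 2) * (1 + s ^ 2 / ((n : ℝ) + 2 + 1) ^ 2) := by
      simp only [p, q, div_pow]

lemma logEulerFactor_zero_sub_one_le (s : ℝ) :
    logEulerFactor s 0 - logEulerFactor s 1 ≤ log 4 := by
  rw [logEulerFactor, logEulerFactor, ← log_div (by positivity) (by positivity)]
  refine log_le_log (by positivity) ?_
  rw [div_le_iff₀ (by positivity)]
  push_cast
  linarith

lemma tsum_logEulerFactor_mul_cos_add_half_isBigO_one {θ : ℝ} (hθ : cos θ < 1) (l : Filter ℝ) :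
    (fun s ↦ ∑' n, logEulerFactor s n * cos ((n + 1) * θ) + logEulerFactor s 0 / 2)
      =O[l] fun _ ↦ (1 : ℝ) := by
  refine .of_bound (log 4 / (1 - cos θ)) (.of_forall fun s ↦ ?_)
  rw [norm_one, mul_one]
  refine (abs_tsum_mul_cos_add_half_le (summable_logEulerFactor s)
    (logEulerFactor_second_difference_nonneg s) hθ).trans ?_
  have : 0 < 1 - cos θ := by linarith
  gcongr
  exact logEulerFactor_zero_sub_one_le s

lemma tsum_logEulerFactor_mul_sin_sq {s φ : ℝ} :
    ∑' n, logEulerFactor s n * sin ((n + 1) * φ) ^ 2 =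
      (∑' n, logEulerFactor s n - ∑' n, logEulerFactor s n * cos ((n + 1) * (2 * φ))) / 2 := by
  have hcos : Summable fun n : ℕ ↦ logEulerFactor s n * cos ((n + 1) * (2 * φ)) :=
    summable_mul_of_abs_le (summable_logEulerFactor s) fun n ↦ abs_cos_le_one _
  rw [← (summable_logEulerFactor s).tsum_sub hcos, ← tsum_div_const]
  refine tsum_congr fun n ↦ ?_
  rw [sin_sq_eq_half_sub, mul_left_comm]
  ring

lemma tsum_logEulerFactor_mul_sin_sq_isBigO_one {φ : ℝ} (hφ : sin φ ≠ 0) :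
    (fun s ↦ ∑' n, logEulerFactor s n * sin ((n + 1) * φ) ^ 2 - π * s / 2)
      =O[atTop] fun _ ↦ (1 : ℝ) := by
  have hcos : cos (2 * φ) < 1 := by
    rw [cos_two_mul']
    linarith [sin_sq_add_cos_sq φ, sq_pos_of_ne_zero hφ]
  -- The two halves of `logEulerFactor s 0`, which grow like `log s`, cancel.
  refine ((tsum_logEulerFactor_add_half_isBigO_one.sub
    (tsum_logEulerFactor_mul_cos_add_half_isBigO_one hcos atTop)).const_mul_left 2⁻¹).congr_left
    fun s ↦ ?_
  rw [tsum_logEulerFactor_mul_sin_sq]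
  ring

end EulerProduct

section ModeSeries

/-- The `n`-th term of the series of `xiB` without its weight, in the units in which the lowest
transverse energy is `x` and the spectral parameter enters through the shift `a`: `magTerm B d z` is
the case `x = (π / d)² / (2|B|)`, `a = (|B| - z) / (2|B|)`. -/
noncomputable def modeTerm (x a : ℝ) (n : ℕ) : ℝ :=
  log (x * ((n : ℝ) + 1) ^ 2) - digamma (x * ((n : ℝ) + 1) ^ 2 + a)

/-- The series of `xiB` with general weights `w n` in place of `sin²(π (n + 1) b / d)`, as a
function of the shift `a`. -/
noncomputable def modeSeries (x : ℝ) (w : ℕ → ℝ) (a : ℝ) : ℝ := ∑' n, modeTerm x a n * w n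

variable {x a c M φ : ℝ} {w : ℕ → ℝ}

lemma mul_add_one_sq_add_pos (hx : 0 < x) (ha : -x < a) (n : ℕ) :
    0 < x * ((n : ℝ) + 1) ^ 2 + a := by
  have hx_le : x ≤ x * ((n : ℝ) + 1) ^ 2 :=
    le_mul_of_one_le_right hx.le (one_le_pow₀ (le_add_of_nonneg_left n.cast_nonneg))
  linarith

lemma strictAntiOn_modeTerm (hx : 0 < x) (n : ℕ) :
    StrictAntiOn (fun a ↦ modeTerm x a n) (Set.Ioi (-x)) := fun _ ha _ hb hab ↦
  sub_lt_sub_left (strictMonoOn_digamma (mul_add_one_sq_add_pos hx ha n)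
    (mul_add_one_sq_add_pos hx hb n) (by gcongr)) _

lemma continuousOn_modeTerm (hx : 0 < x) (n : ℕ) :
    ContinuousOn (fun a ↦ modeTerm x a n) (Set.Ioi (-x)) :=
  continuousOn_const.sub (continuousOn_digamma.comp (continuousOn_const.add continuousOn_id)
    fun _ ha ↦ mul_add_one_sq_add_pos hx ha n)

lemma summable_modeTerm (hx : 0 < x) (a : ℝ) : Summable (modeTerm x a) := by
  have hlim : Tendsto (fun n : ℕ ↦ x * ((n : ℝ) + 1) ^ 2) atTop atTop :=
    ((tendsto_pow_atTop two_ne_zero).comp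
      (tendsto_atTop_add_const_right _ 1 tendsto_natCast_atTop_atTop)).const_mul_atTop hx
  exact summable_of_isBigO_nat (summable_inv_add_one_sq.mul_left x⁻¹)
    (((log_sub_digamma_add_isBigO_inv a).comp_tendsto hlim).congr_right fun n ↦ mul_inv _ _)

lemma strictAntiOn_modeSeries (hx : 0 < x) (hw0 : ∀ n, 0 ≤ w n) (hwM : ∀ n, |w n| ≤ M)
    {i : ℕ} (hi : 0 < w i) : StrictAntiOn (modeSeries x w) (Set.Ioi (-x)) := by
  intro a ha b hb hab
  have hsum (t : ℝ) := summable_mul_of_abs_le (summable_modeTerm hx t) hwM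
  exact (hsum b).tsum_lt_tsum
    (fun n ↦ mul_le_mul_of_nonneg_right ((strictAntiOn_modeTerm hx n).antitoneOn ha hb hab.le)
      (hw0 n))
    (mul_lt_mul_of_pos_right (strictAntiOn_modeTerm hx i ha hb hab) hi) (hsum a)

lemma continuousOn_modeSeries (hx : 0 < x) (hw0 : ∀ n, 0 ≤ w n) (hwM : ∀ n, |w n| ≤ M) :
    ContinuousOn (modeSeries x w) (Set.Ioi (-x)) :=
  continuousOn_tsum_of_antitoneOn isOpen_Ioi
    (fun n _ ha _ hb hab ↦ mul_le_mul_of_nonneg_right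
      ((strictAntiOn_modeTerm hx n).antitoneOn ha hb hab) (hw0 n))
    (fun n ↦ (continuousOn_modeTerm hx n).mul_const (w n))
    fun a _ ↦ summable_mul_of_abs_le (summable_modeTerm hx a) hwM

lemma tendsto_modeTerm_zero_nhdsGT (x : ℝ) :
    Tendsto (fun a ↦ modeTerm x a 0) (𝓝[>] (-x)) atTop := by
  have hshift : Tendsto (x + ·) (𝓝[>] (-x)) (𝓝[>] 0) := by
    refine tendsto_nhdsWithin_iff.2 ⟨?_, ?_⟩
    · exact ((continuous_const_add x).tendsto' _ _ (add_neg_cancel x)).mono_left nhdsWithin_le_nhds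
    · filter_upwards [self_mem_nhdsWithin] with a (ha : -x < a)
      exact neg_lt_iff_pos_add'.1 ha
  refine (tendsto_atTop_add_const_left _ (log x)
    (tendsto_neg_atBot_atTop.comp (tendsto_digamma_nhdsGT_zero.comp hshift))).congr fun a ↦ ?_
  simp [modeTerm, sub_eq_add_neg]

lemma tendsto_modeSeries_nhdsGT (hx : 0 < x) (hw0 : ∀ n, 0 ≤ w n) (hwM : ∀ n, |w n| ≤ M)
    (hw : 0 < w 0) : Tendsto (modeSeries x w) (𝓝[>] (-x)) atTop := by
  refine tendsto_atTop_mono' _ ?_ (tendsto_atTop_add_const_right _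
    (∑' n, modeTerm x 0 (n + 1) * w (n + 1)) ((tendsto_modeTerm_zero_nhdsGT x).atTop_mul_const hw))
  have hneg : -x < 0 := by linarith
  filter_upwards [Ioc_mem_nhdsGT hneg] with a ha
  have hsum (t : ℝ) := summable_mul_of_abs_le (summable_modeTerm hx t) hwM
  rw [modeSeries, (hsum a).tsum_eq_zero_add]
  gcongr with n
  · exact (summable_nat_add_iff 1).2 (hsum 0)
  · exact (summable_nat_add_iff 1).2 (hsum a)
  · exact hw0 (n + 1)
  · exact (strictAntiOn_modeTerm hx (n + 1)).antitoneOn ha.1 hneg ha.2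

lemma abs_modeTerm_add_logEulerFactor_le (hx : 0 < x) (hc : 0 ≤ c) (s : ℝ) (n : ℕ) :
    |modeTerm x (x * s ^ 2 + c) n + logEulerFactor s n| ≤ (1 + c) / (x * ((n : ℝ) + 1) ^ 2) := by
  set X := x * ((n : ℝ) + 1) ^ 2 + x * s ^ 2
  have hX : 0 < X := by positivity
  have hlog : log (x * ((n : ℝ) + 1) ^ 2) + logEulerFactor s n = log X := by
    rw [logEulerFactor, ← log_mul (by positivity) (by positivity)]
    congr 1
    simp only [X]
    field_simp
  calc |modeTerm x (x * s ^ 2 + c) n + logEulerFactor s n| = |log X - digamma (X + c)| := by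
        rw [modeTerm, sub_add_eq_add_sub, hlog, ← add_assoc]
    _ ≤ (1 + |X - (X + c)|) / min X (X + c) := abs_log_sub_digamma_le hX (by positivity)
    _ = (1 + c) / X := by
        rw [sub_add_cancel_left, abs_neg, abs_of_nonneg hc, min_eq_left (by linarith)]
    _ ≤ (1 + c) / (x * ((n : ℝ) + 1) ^ 2) := by
        gcongr
        exact le_add_of_nonneg_right (by positivity)

lemma modeSeries_add_tsum_logEulerFactor_isBigO_one (hx : 0 < x) (hc : 0 ≤ c)
    (hwM : ∀ n, |w n| ≤ M) (l : Filter ℝ) :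
    (fun s ↦ modeSeries x w (x * s ^ 2 + c) + ∑' n, logEulerFactor s n * w n)
      =O[l] fun _ ↦ (1 : ℝ) := by
  have hbound : Summable fun n : ℕ ↦ (1 + c) / (x * ((n : ℝ) + 1) ^ 2) * M := by
    simpa only [div_eq_mul_inv, mul_inv] using
      ((summable_inv_add_one_sq.mul_left x⁻¹).mul_left (1 + c)).mul_right M
  refine .of_bound (∑' n : ℕ, (1 + c) / (x * ((n : ℝ) + 1) ^ 2) * M) (.of_forall fun s ↦ ?_)
  rw [norm_one, mul_one, modeSeries,
    ← (summable_mul_of_abs_le (summable_modeTerm hx _) hwM).tsum_add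
      (summable_mul_of_abs_le (summable_logEulerFactor s) hwM)]
  refine tsum_of_norm_bounded hbound.hasSum fun n ↦ ?_
  rw [← add_mul, norm_mul]
  exact mul_le_mul (abs_modeTerm_add_logEulerFactor_le hx hc s n) (hwM n) (abs_nonneg _)
    (by positivity)

lemma abs_sin_sq_le_one (x : ℝ) : |sin x ^ 2| ≤ 1 := by
  rw [abs_of_nonneg (sq_nonneg _)]
  exact sin_sq_le_one x

lemma modeSeries_sin_sq_isBigO_one (hx : 0 < x) (hc : 0 ≤ c) (hφ : sin φ ≠ 0) :
    (fun s ↦ modeSeries x (fun n ↦ sin ((n + 1) * φ) ^ 2) (x * s ^ 2 + c) + π * s / 2)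
      =O[atTop] fun _ ↦ (1 : ℝ) := by
  refine ((modeSeries_add_tsum_logEulerFactor_isBigO_one hx hc
    (fun n ↦ abs_sin_sq_le_one ((n + 1) * φ)) atTop).sub
    (tsum_logEulerFactor_mul_sin_sq_isBigO_one hφ)).congr_left fun s ↦ ?_
  ring

end ModeSeries

section GreenFunction

/-- The lowest transverse energy `(π / d)²` in units of the gap `2|B|` between Landau levels. -/
noncomputable def transverseRatio (B d : ℝ) : ℝ := (π / d) ^ 2 / (2 * |B|)

/-- The shift of the digamma arguments in `xiB` at spectral parameter `z`. -/
noncomputable def landauShift (B z : ℝ) : ℝ := (|B| - z) / (2 * |B|)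

/-- The part of `xiB` that does not depend on the spectral parameter. -/
noncomputable def xiBOffset (d b : ℝ) : ℝ :=
  (1 / (4 * π * d)) *
    (eulerMascheroniConstant + digamma (b / d) + (π / 2) * cot (π * b / d))

variable {B d b : ℝ}

lemma transverseRatio_pos (hB : B ≠ 0) (hd : 0 < d) : 0 < transverseRatio B d := by
  have : 0 < |B| := abs_pos.2 hB
  unfold transverseRatio
  positivity

lemma strictAnti_landauShift (hB : B ≠ 0) : StrictAnti (landauShift B) := fun z w hzw ↦ by
  have : 0 < |B| := abs_pos.2 hB
  unfold landauShift
  gcongr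

lemma continuous_landauShift (B : ℝ) : Continuous (landauShift B) := by
  unfold landauShift
  fun_prop

lemma landauShift_bottom (B d : ℝ) :
    landauShift B (|B| + (π / d) ^ 2) = -transverseRatio B d := by
  rw [landauShift, transverseRatio, sub_add_cancel_left, neg_div]

lemma mapsTo_landauShift (hB : B ≠ 0) (d : ℝ) :
    Set.MapsTo (landauShift B) (Set.Iio (|B| + (π / d) ^ 2)) (Set.Ioi (-transverseRatio B d)) :=
  fun _ hz ↦ (landauShift_bottom B d).symm.trans_lt (strictAnti_landauShift hB hz)

lemma magTerm_eq_modeTerm (B d z : ℝ) :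
    magTerm B d z = modeTerm (transverseRatio B d) (landauShift B z) := by
  funext n
  rw [magTerm, modeTerm, transverseRatio, landauShift]
  congr 2 <;> ring

lemma xiB_eq (B d b z : ℝ) :
    xiB B d b z = 1 / (2 * π * d) * modeSeries (transverseRatio B d)
      (fun n ↦ sin ((n + 1) * (π * b / d)) ^ 2) (landauShift B z) + xiBOffset d b := by
  have hangle (n : ℕ) : π * ((n : ℝ) + 1) * b / d = (n + 1) * (π * b / d) := by ring
  simp only [xiB, magTerm_eq_modeTerm, hangle, modeSeries, xiBOffset]

lemma sin_pi_mul_div_pos (hb0 : 0 < b) (hbd : b < d) : 0 < sin (π * b / d) := by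
  have hd : 0 < d := hb0.trans hbd
  refine sin_pos_of_pos_of_lt_pi (by positivity) ?_
  rw [div_lt_iff₀ hd]
  gcongr

lemma strictMonoOn_xiB (hB : B ≠ 0) (hb0 : 0 < b) (hbd : b < d) :
    StrictMonoOn (xiB B d b) (Set.Iio (|B| + (π / d) ^ 2)) := by
  intro z hz w hw hzw
  have hd : 0 < d := hb0.trans hbd
  rw [xiB_eq, xiB_eq]
  gcongr
  exact strictAntiOn_modeSeries (transverseRatio_pos hB hd) (fun n ↦ sq_nonneg _)
    (fun n ↦ abs_sin_sq_le_one _) (i := 0) (by simpa using pow_pos (sin_pi_mul_div_pos hb0 hbd) 2)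
    (mapsTo_landauShift hB d hw) (mapsTo_landauShift hB d hz) (strictAnti_landauShift hB hzw)

lemma continuousOn_xiB (hB : B ≠ 0) (hd : 0 < d) (b : ℝ) :
    ContinuousOn (xiB B d b) (Set.Iio (|B| + (π / d) ^ 2)) := by
  have hcont := (continuousOn_modeSeries (transverseRatio_pos hB hd) (fun n ↦ sq_nonneg _)
    fun n ↦ abs_sin_sq_le_one ((n + 1) * (π * b / d))).comp
      (continuous_landauShift B).continuousOn (mapsTo_landauShift hB d)
  exact ((hcont.const_mul (1 / (2 * π * d))).add_const (xiBOffset d b)).congr fun z _ ↦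
    xiB_eq B d b z

lemma tendsto_xiB_nhdsLT (hB : B ≠ 0) (hb0 : 0 < b) (hbd : b < d) :
    Tendsto (xiB B d b) (𝓝[<] (|B| + (π / d) ^ 2)) atTop := by
  have hd : 0 < d := hb0.trans hbd
  have hshift : Tendsto (landauShift B) (𝓝[<] (|B| + (π / d) ^ 2))
      (𝓝[>] (-transverseRatio B d)) :=
    tendsto_nhdsWithin_of_tendsto_nhds_of_eventually_within _
      (((continuous_landauShift B).tendsto' _ _ (landauShift_bottom B d)).mono_left
        nhdsWithin_le_nhds)
      (eventually_nhdsWithin_of_forall (mapsTo_landauShift hB d))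
  have hseries := (tendsto_modeSeries_nhdsGT (transverseRatio_pos hB hd) (fun n ↦ sq_nonneg _)
    (fun n ↦ abs_sin_sq_le_one ((n + 1) * (π * b / d)))
    (by simpa using pow_pos (sin_pi_mul_div_pos hb0 hbd) 2)).comp hshift
  exact (tendsto_atTop_add_const_right _ (xiBOffset d b) (hseries.const_mul_atTop
    (by positivity : 0 < 1 / (2 * π * d)))).congr fun z ↦ (xiB_eq B d b z).symm

lemma landauShift_neg_sq (hB : B ≠ 0) (hd : d ≠ 0) (k : ℝ) :
    landauShift B (-k ^ 2) = transverseRatio B d * (k * d / π) ^ 2 + 1 / 2 := by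
  have hB' : |B| ≠ 0 := abs_ne_zero.2 hB
  rw [landauShift, transverseRatio]
  field_simp
  ring

lemma xiB_neg_sq_add_isBigO_one (hB : B ≠ 0) (hb0 : 0 < b) (hbd : b < d) :
    (fun k ↦ 4 * π * xiB B d b (-k ^ 2) + k) =O[atTop] fun _ ↦ (1 : ℝ) := by
  have hd : 0 < d := hb0.trans hbd
  have hscale : Tendsto (fun k ↦ k * d / π) atTop atTop :=
    (tendsto_id.atTop_mul_const hd).atTop_div_const pi_pos
  have hseries := (modeSeries_sin_sq_isBigO_one (transverseRatio_pos hB hd) one_half_pos.le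
    (sin_pi_mul_div_pos hb0 hbd).ne').comp_tendsto hscale
  refine ((hseries.const_mul_left (2 / d)).add
    (isBigO_const_one ℝ (4 * π * xiBOffset d b) _)).congr_left fun k ↦ ?_
  rw [xiB_eq, landauShift_neg_sq hB hd.ne', Function.comp_apply]
  generalize modeSeries (transverseRatio B d) _ _ = S
  field_simp
  ring

end GreenFunction

section Inversion

variable {f g : ℝ → ℝ} {E a : ℝ}

lemma existsUnique_lt_and_eq (hmono : StrictMonoOn f (Set.Iio E))
    (hcont : ContinuousOn f (Set.Iio E)) (hbot : Tendsto f atBot atBot)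
    (htop : Tendsto f (𝓝[<] E) atTop) (y : ℝ) : ∃! z, z < E ∧ f z = y := by
  obtain ⟨z, hz, hfz⟩ := isPreconnected_Iio.intermediate_value_Iii
    (le_principal_iff.2 (Iio_mem_atBot E)) (le_principal_iff.2 self_mem_nhdsWithin) hcont hbot htop
    (Set.mem_univ y)
  exact ⟨z, ⟨hz, hfz⟩, fun w hw ↦ hmono.injOn hw.1 hz (hw.2.trans hfz.symm)⟩

lemma tendsto_sqrt_neg_atBot : Tendsto (fun z ↦ √(-z)) atBot atTop :=
  tendsto_sqrt_atTop.comp tendsto_neg_atBot_atTop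

lemma tendsto_atBot_of_neg_sq_add_isBigO_one (ha : 0 < a)
    (hasymp : (fun k ↦ a * f (-k ^ 2) + k) =O[atTop] fun _ ↦ (1 : ℝ)) :
    Tendsto f atBot atBot := by
  obtain ⟨C, hC⟩ := (hasymp.comp_tendsto tendsto_sqrt_neg_atBot).bound
  refine tendsto_atBot_mono' _ ?_
    ((tendsto_atBot_add_const_left _ C
      (tendsto_neg_atTop_atBot.comp tendsto_sqrt_neg_atBot)).atBot_div_const ha)
  filter_upwards [hC, eventually_le_atBot 0] with z hz hz0
  simp only [Function.comp_apply, norm_one, mul_one, sq_sqrt (neg_nonneg.2 hz0), neg_neg] at hz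
  rw [Function.comp_apply, le_div_iff₀ ha]
  linarith [le_norm_self (a * f z + √(-z))]

lemma tendsto_rightInverse_atBot (hmono : MonotoneOn f (Set.Iio E))
    (hg : ∀ y, g y < E ∧ f (g y) = y) : Tendsto g atBot atBot := by
  refine tendsto_atBot.2 fun m ↦ ?_
  have hmin : min m (E - 1) < E := (min_le_right _ _).trans_lt (sub_one_lt E)
  filter_upwards [eventually_lt_atBot (f (min m (E - 1)))] with y hy
  rw [← (hg y).2] at hy
  exact (hmono.reflect_lt (hg y).1 hmin hy).le.trans (min_le_left _ _)

lemma rightInverse_add_sq_isBigO (hmono : MonotoneOn f (Set.Iio E))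
    (hasymp : (fun k ↦ a * f (-k ^ 2) + k) =O[atTop] fun _ ↦ (1 : ℝ))
    (hg : ∀ y, g y < E ∧ f (g y) = y) :
    (fun y ↦ g y + (a * y) ^ 2) =O[atBot] fun y ↦ y := by
  have hlim : Tendsto g atBot atBot := tendsto_rightInverse_atBot hmono hg
  have hone : (fun _ ↦ (1 : ℝ)) =O[atBot] fun y : ℝ ↦ y :=
    (isLittleO_const_id_atBot 1).isBigO
  have hadd : (fun y ↦ a * y + √(-g y)) =O[atBot] fun _ ↦ (1 : ℝ) := by
    refine (hasymp.comp_tendsto (tendsto_sqrt_neg_atBot.comp hlim)).congr' ?_ .rfl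
    filter_upwards [hlim.eventually_le_atBot 0] with y hy
    simp only [Function.comp_apply, sq_sqrt (neg_nonneg.2 hy), neg_neg, (hg y).2]
  have hsub : (fun y ↦ a * y - √(-g y)) =O[atBot] fun y ↦ y := by
    refine (((isBigO_refl _ _).const_mul_left (2 * a)).sub (hadd.trans hone)).congr_left fun y ↦ ?_
    ring
  refine (hadd.mul hsub).congr' ?_ (.of_forall fun y ↦ one_mul y)
  filter_upwards [hlim.eventually_le_atBot 0] with y hy
  linear_combination -sq_sqrt (neg_nonneg.2 hy)

end Inversion

/-- Strong-coupling asymptotics of the lowest magnetic eigenvalue: for every `α`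
there is a unique `z = ε₀(α)` below the bottom `|B| + (π/d)²` of `Σ_B` with
`ξ_B(b,z) = α`, and `ε₀(α) = −16π²α²·(1 + O(α^{−1}))` as `α → −∞`, i.e.
`|ε₀(α) + 16π²α²| ≤ C·|α|` for `α` negative enough; the leading term is
independent of `B`. -/
theorem xiB_lowest_eigenvalue_strong_coupling (B d b : ℝ) (hB : B ≠ 0) (hd : 0 < d)
    (hb0 : 0 < b) (hbd : b < d) :
    (∀ α : ℝ, ∃! z : ℝ, z < |B| + (π / d) ^ 2 ∧ xiB B d b z = α) ∧
    (∀ ε₀ : ℝ → ℝ, (∀ α : ℝ, ε₀ α < |B| + (π / d) ^ 2 ∧ xiB B d b (ε₀ α) = α) →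
      ∃ C α₀ : ℝ, α₀ < 0 ∧ ∀ α : ℝ, α ≤ α₀ →
        |ε₀ α + 16 * π ^ 2 * α ^ 2| ≤ C * |α|) := by
  have hmono := strictMonoOn_xiB hB hb0 hbd
  have hasymp := xiB_neg_sq_add_isBigO_one hB hb0 hbd
  refine ⟨existsUnique_lt_and_eq hmono (continuousOn_xiB hB hd b)
    (tendsto_atBot_of_neg_sq_add_isBigO_one (by positivity) hasymp)
    (tendsto_xiB_nhdsLT hB hb0 hbd), fun ε₀ hε₀ ↦ ?_⟩
  obtain ⟨C, hC⟩ := (rightInverse_add_sq_isBigO hmono.monotoneOn hasymp hε₀).bound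
  obtain ⟨α₀, hα₀⟩ := eventually_atBot.1 hC
  refine ⟨C, min α₀ (-1), by simp, fun α hα ↦ ?_⟩
  calc |ε₀ α + 16 * π ^ 2 * α ^ 2| = ‖ε₀ α + (4 * π * α) ^ 2‖ := by
        rw [norm_eq_abs]
        ring_nf
    _ ≤ C * |α| := hα₀ α (hα.trans (min_le_left _ _))
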